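/- Let k ≥ 1 be an integer with k ≤ |α| if α ∈ ℤ (no restriction if α ∉ ℤ), and let l ≥ 1 be an integer with l ≤ |β| if β ∈ ℤ (no restriction if β ∉ ℤ). Then, in the ℂ-vector space of all functions ℤ → ℂ, the kernel of the k-th power of (L_{α,β;ε} − Id) equals the span of the 2k functions φ₊^{(0)},…,φ₊^{(k−1)}, ψ₊^{(0)},…,ψ₊^{(k−1)}, and the kernel of the l-th power of (L_{α,β;ε} + Id) equals the span of the 2l functions φ₋^{(0)},…,φ₋^{(l−1)}, ψ₋^{(0)},…,ψ₋^{(l−1)}. In particular each of these two families is linearly independent, so these kernels have dimensions 2k and 2l respectively. -/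

import Mathlib

/-- Pochhammer symbol `(a)_n` for complex `a` and integer `n`. -/
noncomputable def poch (a : ℂ) (n : ℤ) : ℂ :=
  if 0 ≤ n then ∏ j ∈ Finset.range n.toNat, (a + (j : ℂ))
  else (∏ j ∈ Finset.range (-n).toNat, (a + (n : ℂ) + (j : ℂ)))⁻¹

/-- Gauss hypergeometric series `F(a,b;c;x)`. -/
noncomputable def hypF (a b c x : ℂ) : ℂ :=
  ∑' j : ℕ, (poch a (j : ℤ) * poch b (j : ℤ)) / ((j.factorial : ℂ) * poch c (j : ℤ)) * x ^ j

/-- The Jacobi difference operator `L_{α,β;ε}`. -/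
noncomputable def jacobiL (α β ε : ℂ) (f : ℤ → ℂ) (n : ℤ) : ℂ :=
  (2 * ((n : ℂ) + ε + 1) * ((n : ℂ) + ε + α + β + 1) /
      ((2 * (n : ℂ) + 2 * ε + α + β + 1) * (2 * (n : ℂ) + 2 * ε + α + β + 2))) * f (n + 1)
  + ((β ^ 2 - α ^ 2) /
      ((2 * (n : ℂ) + 2 * ε + α + β) * (2 * (n : ℂ) + 2 * ε + α + β + 2))) * f n
  + (2 * ((n : ℂ) + ε + α) * ((n : ℂ) + ε + β) /
      ((2 * (n : ℂ) + 2 * ε + α + β) * (2 * (n : ℂ) + 2 * ε + α + β + 1))) * f (n - 1)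

/-- The eigenvalue `λ_ε(n) = (n+ε)(n+ε+α+β+1)`. -/
noncomputable def lamE (α β ε : ℂ) (n : ℤ) : ℂ := ((n : ℂ) + ε) * ((n : ℂ) + ε + α + β + 1)

/-- The function `p^{α,β}_ε(n,z)` (case `α ∉ ℤ_{<0}`). -/
noncomputable def pStd (α β ε : ℂ) (n : ℤ) (z : ℂ) : ℂ :=
  (poch (ε + α + 1) n / poch (ε + 1) n) *
    hypF (-((n : ℂ) + ε)) ((n : ℂ) + ε + α + β + 1) (α + 1) ((1 - z) / 2)

/-- None of `ε, ε+α, ε+β, ε+α+β, 2ε+α+β` is an integer. -/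
def GoodParams (α β ε : ℂ) : Prop :=
  ∀ m : ℤ, ε ≠ (m : ℂ) ∧ ε + α ≠ (m : ℂ) ∧ ε + β ≠ (m : ℂ) ∧
    ε + α + β ≠ (m : ℂ) ∧ 2 * ε + α + β ≠ (m : ℂ)

/-- `φ₊^{(i)}(n)`. -/
noncomputable def phiPd (α β ε : ℂ) (i : ℕ) (n : ℤ) : ℂ :=
  (poch (ε + α + 1) n / poch (ε + 1) n) *
    (poch (-((n : ℂ) + ε)) (i : ℤ) * poch ((n : ℂ) + ε + α + β + 1) (i : ℤ)) /
      ((-2 : ℂ) ^ i * (i.factorial : ℂ) * poch (α + 1) (i : ℤ))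

/-- `ψ₊^{(i)}(n)`. -/
noncomputable def psiPd (α β ε : ℂ) (i : ℕ) (n : ℤ) : ℂ :=
  (poch (ε + β + 1) n / poch (ε + α + β + 1) n) *
    (poch (-((n : ℂ) + ε + α + β)) (i : ℤ) * poch ((n : ℂ) + ε + 1) (i : ℤ)) /
      ((-2 : ℂ) ^ i * (i.factorial : ℂ) * poch (-α + 1) (i : ℤ))

/-- `φ₋^{(i)}(n)`. -/
noncomputable def phiMd (α β ε : ℂ) (i : ℕ) (n : ℤ) : ℂ :=
  (-1 : ℂ) ^ n * (poch (ε + β + 1) n / poch (ε + 1) n) *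
    (poch (-((n : ℂ) + ε)) (i : ℤ) * poch ((n : ℂ) + ε + α + β + 1) (i : ℤ)) /
      ((2 : ℂ) ^ i * (i.factorial : ℂ) * poch (β + 1) (i : ℤ))

/-- `ψ₋^{(i)}(n)`. -/
noncomputable def psiMd (α β ε : ℂ) (i : ℕ) (n : ℤ) : ℂ :=
  (-1 : ℂ) ^ n * (poch (ε + α + 1) n / poch (ε + α + β + 1) n) *
    (poch (-((n : ℂ) + ε + α + β)) (i : ℤ) * poch ((n : ℂ) + ε + 1) (i : ℤ)) /
      ((2 : ℂ) ^ i * (i.factorial : ℂ) * poch (-β + 1) (i : ℤ))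

/-- The Jacobi difference operator as a linear endomorphism of `ℤ → ℂ`. -/
noncomputable def jacobiLin (α β ε : ℂ) : Module.End ℂ (ℤ → ℂ) where
  toFun f := jacobiL α β ε f
  map_add' f g := by
    funext n
    simp only [jacobiL, Pi.add_apply]
    ring
  map_smul' c f := by
    funext n
    simp only [jacobiL, Pi.smul_apply, smul_eq_mul, RingHom.id_apply]
    ring

/-!
Conjugation by the weight `w n = (ε+α+1)_n / (ε+1)_n` turns `L - 1` into a difference operator
without zeroth-order term. On the products `(-x)_i (x+α+β+1)_i`, `x = n + ε`, both of its
differences are explicit multiples of the product of index `i - 1`, so `L - 1` lowers the index by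
one: the functions `φ₊` form a Jordan chain. The operator is invariant under
`(α, β, ε) ↦ (-α, -β, ε+α+β)`, which sends `φ₊` to `ψ₊`, and multiplication by `(-1)^n` carries
`L_{β,α;ε} - 1` to `-(L_{α,β;ε} + 1)`, which gives the chains `φ₋` and `ψ₋`. The kernel of `L - 1`
is the solution space of a nondegenerate three-term recurrence, hence at most two-dimensional, and
it is spanned by `φ₊^{(0)}` and `ψ₊^{(0)}` because their Casoratian does not vanish. Two Jordan
chains of length `k` over a basis of the kernel of an operator form a basis of the kernel of its
`k`-th power.
-/

section JordanBasis

variable {ι R V W : Type*} [CommRing R] [AddCommGroup V] [Module R V] [AddCommGroup W] [Module R W]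

/-- The chains `v i 0, …, v i (k - 1)` are Jordan chains of length `k` for the eigenvalue `0` of
`T`, and their first vectors form a basis of `ker T`. Nothing is required of
`v i j` for `j ≥ k` and `j > 0`. -/
structure IsJordanBasis (T : Module.End R V) (k : ℕ) (v : ι → ℕ → V) : Prop where
  apply_zero : ∀ i, T (v i 0) = 0
  apply_succ : ∀ i j, j + 1 < k → T (v i (j + 1)) = v i j
  linearIndependent_zero : LinearIndependent R fun i => v i 0
  ker_le_span : LinearMap.ker T ≤ Submodule.span R (Set.range fun i => v i 0)

namespace IsJordanBasis

variable {T : Module.End R V} {k : ℕ} {v : ι → ℕ → V}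

theorem mono (h : IsJordanBasis T k v) {j : ℕ} (hjk : j ≤ k) : IsJordanBasis T j v where
  apply_zero := h.apply_zero
  apply_succ i m hm := h.apply_succ i m (hm.trans_le hjk)
  linearIndependent_zero := h.linearIndependent_zero
  ker_le_span := h.ker_le_span

theorem ker_eq_span (h : IsJordanBasis T k v) :
    LinearMap.ker T = Submodule.span R (Set.range fun i => v i 0) :=
  h.ker_le_span.antisymm <| Submodule.span_le.2 <| Set.range_subset_iff.2 h.apply_zero

theorem ker_pow_eq_span (h : IsJordanBasis T k v) :
    LinearMap.ker (T ^ k) = Submodule.span R (Set.range fun p : ι × Fin k => v p.1 p.2) := by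
  induction k with
  | zero => simp [Set.range_eq_empty, Module.End.one_eq_id]
  | succ k ih =>
    let tail : ι × Fin k → V := fun p => v p.1 (p.2 + 1)
    have map_tail : Set.range (fun p : ι × Fin k => v p.1 p.2) = T '' Set.range tail := by
      rw [← Set.range_comp]
      congr 1
      exact funext fun p => (h.apply_succ p.1 p.2 (by lia)).symm
    have range_split : Set.range (fun p : ι × Fin (k + 1) => v p.1 p.2)
        = Set.range tail ∪ Set.range fun i => v i 0 := by
      ext g
      simp [tail, Fin.exists_fin_succ, exists_or, or_comm]
    calc LinearMap.ker (T ^ (k + 1))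
        = (LinearMap.ker (T ^ k)).comap T := by
          rw [pow_succ, Module.End.mul_eq_comp, LinearMap.ker_comp]
      _ = ((Submodule.span R (Set.range tail)).map T).comap T := by
          rw [ih (h.mono k.le_succ), map_tail, Submodule.map_span]
      _ = Submodule.span R (Set.range tail) ⊔ LinearMap.ker T := Submodule.comap_map_eq _ _
      _ = Submodule.span R (Set.range fun p : ι × Fin (k + 1) => v p.1 p.2) := by
          rw [h.ker_eq_span, ← Submodule.span_union, range_split]

theorem linearIndependent [Finite ι] (h : IsJordanBasis T k v) :
    LinearIndependent R fun p : ι × Fin k => v p.1 p.2 := by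
  cases nonempty_fintype ι
  induction k with
  | zero => exact linearIndependent_empty_type
  | succ k ih =>
    have ih := Fintype.linearIndependent_iff.1 (ih (h.mono k.le_succ))
    refine Fintype.linearIndependent_iff.2 fun c hc => ?_
    simp only [Fintype.sum_prod_type, Fin.sum_univ_succ, Fin.val_zero, Fin.val_succ] at hc
    have tail_zero : ∀ p : ι × Fin k, c (p.1, p.2.succ) = 0 := by
      refine ih _ ?_
      have hTc := congrArg T hc
      simpa [Fintype.sum_prod_type, h.apply_zero, h.apply_succ] using hTc
    have head_zero : ∀ i, c (i, 0) = 0 := by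
      refine Fintype.linearIndependent_iff.1 h.linearIndependent_zero _ ?_
      simpa [fun i j => tail_zero (i, j)] using hc
    rintro ⟨i, j⟩
    cases j using Fin.cases with
    | zero => exact head_zero i
    | succ j => exact tail_zero (i, j)

theorem finrank_ker_pow [Nontrivial R] [Fintype ι] (h : IsJordanBasis T k v) :
    Module.finrank R (LinearMap.ker (T ^ k)) = Fintype.card ι * k := by
  rw [h.ker_pow_eq_span, finrank_span_eq_card h.linearIndependent, Fintype.card_prod,
    Fintype.card_fin]

theorem ker_pow_eq_span_of_bool {v : Bool → ℕ → V} (h : IsJordanBasis T k v) :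
    LinearMap.ker (T ^ k)
      = Submodule.span R {g | ∃ i < k, g = v false i ∨ g = v true i} := by
  rw [h.ker_pow_eq_span]
  congr 1
  ext g
  simp [Fin.exists_iff, and_or_left, exists_or, eq_comm]

theorem linearIndependent_sumElim_of_bool {v : Bool → ℕ → V} (h : IsJordanBasis T k v) :
    LinearIndependent R fun x : Fin k ⊕ Fin k =>
      Sum.elim (fun i : Fin k => v false i) (fun i : Fin k => v true i) x := by
  refine (linearIndependent_equiv' (Equiv.boolProdEquivSum (Fin k)) ?_).1 h.linearIndependent
  ext ⟨_ | _, i⟩ <;> rfl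

theorem conj {S : V ≃ₗ[R] W} {T' : Module.End R W} {c : Rˣ} (h : IsJordanBasis T k v)
    (hS : ∀ f, T' (S f) = c • S (T f)) :
    IsJordanBasis T' k fun i j => c⁻¹ ^ j • S (v i j) where
  apply_zero i := by simp [hS, h.apply_zero]
  apply_succ i j hj := by
    rw [LinearMap.map_smul_of_tower, hS, h.apply_succ i j hj, smul_smul, pow_succ,
      inv_mul_cancel_right]
  linearIndependent_zero := by
    simpa [Function.comp_def] using h.linearIndependent_zero.map' S.toLinearMap S.ker
  ker_le_span := by
    intro g hg
    have hker : S.symm g ∈ LinearMap.ker T := by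
      have hcS : c • S (T (S.symm g)) = 0 := by rw [← hS, S.apply_symm_apply]; exact hg
      rwa [smul_eq_zero_iff_eq, S.map_eq_zero_iff] at hcS
    have hspan := Submodule.mem_map_of_mem (f := S.toLinearMap) (h.ker_le_span hker)
    rw [Submodule.map_span, ← Set.range_comp] at hspan
    simpa [Function.comp_def] using hspan

end IsJordanBasis

end JordanBasis

section Recurrence

variable {K : Type*} [Field K]

theorem eq_zero_of_three_term_recurrence {a b c f : ℤ → K} (ha : ∀ n, a n ≠ 0)
    (hc : ∀ n, c n ≠ 0) (hf : ∀ n, a n * f (n + 1) + b n * f n + c n * f (n - 1) = 0)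
    (h0 : f 0 = 0) (h1 : f 1 = 0) : f = 0 := by
  have consecutive_zeros : ∀ n : ℤ, f n = 0 ∧ f (n + 1) = 0 := by
    intro n
    induction n using Int.induction_on with
    | zero => exact ⟨h0, h1⟩
    | succ n ih => simpa [ih, ha] using hf (n + 1)
    | pred n ih => simpa [ih, hc] using hf (-n)
  exact funext fun n => (consecutive_zeros n).1

theorem linearIndependent_pair_of_casoratian_ne_zero {u w : ℤ → K}
    (hcas : u 0 * w 1 - u 1 * w 0 ≠ 0) : LinearIndependent K ![u, w] := by
  refine LinearIndependent.pair_iff.2 fun a b hab => ?_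
  have eval_zero : a * u 0 + b * w 0 = 0 := congrFun hab 0
  have eval_one : a * u 1 + b * w 1 = 0 := congrFun hab 1
  constructor
  · refine (mul_eq_zero.1 ?_).resolve_right hcas
    linear_combination w 1 * eval_zero - w 0 * eval_one
  · refine (mul_eq_zero.1 ?_).resolve_right hcas
    linear_combination u 0 * eval_one - u 1 * eval_zero

theorem ker_le_span_pair_of_casoratian_ne_zero {u w : ℤ → K}
    (hcas : u 0 * w 1 - u 1 * w 0 ≠ 0) {T : Module.End K (ℤ → K)} (hu : T u = 0) (hw : T w = 0)
    (hT : ∀ f, T f = 0 → f 0 = 0 → f 1 = 0 → f = 0) :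
    LinearMap.ker T ≤ Submodule.span K {u, w} := by
  intro f (hf : T f = 0)
  set D := u 0 * w 1 - u 1 * w 0 with hD
  -- Cramer's rule for the initial values at `0` and `1`.
  set a := (f 0 * w 1 - f 1 * w 0) / D with ha
  set b := (u 0 * f 1 - u 1 * f 0) / D with hb
  have hdiff : a • u + b • w - f = 0 := by
    refine hT _ (by simp [hu, hw, hf]) ?_ ?_ <;>
    · simp only [Pi.sub_apply, Pi.add_apply, Pi.smul_apply, smul_eq_mul, ha, hb]
      field_simp
      rw [hD]
      ring
  exact Submodule.mem_span_pair.2 ⟨a, b, sub_eq_zero.1 hdiff⟩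

end Recurrence

section Pochhammer

theorem poch_natCast (a : ℂ) (i : ℕ) : poch a i = ∏ j ∈ Finset.range i, (a + j) := by
  simp [poch]

theorem poch_zero (a : ℂ) : poch a 0 = 1 := by simp [poch]

theorem poch_natCast_succ (a : ℂ) (i : ℕ) : poch a (i + 1 : ℕ) = poch a i * (a + i) := by
  rw [poch_natCast, poch_natCast, Finset.prod_range_succ]

theorem poch_natCast_succ_left (a : ℂ) (i : ℕ) : poch a (i + 1 : ℕ) = a * poch (a + 1) i := by
  rw [poch_natCast, poch_natCast, Finset.prod_range_succ', mul_comm, Nat.cast_zero, add_zero]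
  simp [add_assoc, add_comm (1 : ℂ)]

theorem poch_neg_natCast (a : ℂ) (i : ℕ) :
    poch a (-i) = (∏ j ∈ Finset.range i, (a - i + j))⁻¹ := by
  cases i with
  | zero => simp [poch]
  | succ i =>
    rw [poch, if_neg (by lia), neg_neg, Int.toNat_natCast]
    simp [sub_eq_add_neg]

theorem poch_add_one {a : ℂ} {n : ℤ} (ha : a + n ≠ 0) : poch a (n + 1) = poch a n * (a + n) := by
  rcases n with i | i
  · exact poch_natCast_succ a i
  · rw [Int.negSucc_eq] at ha ⊢
    have hprod : ∏ j ∈ Finset.range i, (a - (i + 1 : ℕ) + (j + 1 : ℕ))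
        = ∏ j ∈ Finset.range i, (a - i + j) :=
      Finset.prod_congr rfl fun j _ => by push_cast; ring
    have hlast : a - (i + 1 : ℕ) + (0 : ℕ) = a + (-((i : ℤ) + 1) : ℤ) := by push_cast; ring
    rw [show -((i : ℤ) + 1) + 1 = -i by ring, show -((i : ℤ) + 1) = -(i + 1 : ℕ) by simp] at *
    rw [poch_neg_natCast, poch_neg_natCast, Finset.prod_range_succ', hprod, hlast, mul_inv,
      inv_mul_cancel_right₀ ha]

end Pochhammer

section NewtonProduct

/-- The product `(-x)_i (x+s+1)_i`, a polynomial of degree `i` in `x (x+s+1)`: the part of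
`φ₊^{(i)}` and `φ₋^{(i)}` that depends on `i`, with `x = n + ε` and `s = α + β`. -/
noncomputable def newtonProd (s x : ℂ) (i : ℕ) : ℂ := poch (-x) i * poch (x + s + 1) i

theorem newtonProd_zero (s x : ℂ) : newtonProd s x 0 = 1 := by simp [newtonProd, poch_zero]

theorem newtonProd_reflect (s x : ℂ) (i : ℕ) : newtonProd s (-x - s - 1) i = newtonProd s x i := by
  rw [newtonProd, newtonProd, mul_comm]
  ring_nf

theorem newtonProd_forward_difference (s x : ℂ) (i : ℕ) :
    (x + s + 1) * (newtonProd s (x + 1) (i + 1) - newtonProd s x (i + 1))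
      = -(i + 1) * (2 * x + s + 2) * (x + s + 1 + i) * newtonProd s x i := by
  have shift_left : poch (-(x + 1)) (i + 1 : ℕ) = -(x + 1) * poch (-x) i := by
    rw [poch_natCast_succ_left]; ring_nf
  have shift_right : (x + s + 1) * poch (x + 1 + s + 1) (i + 1 : ℕ)
      = poch (x + s + 1) i * (x + s + 1 + i) * (x + s + 2 + i) := by
    rw [poch_natCast_succ, ← mul_assoc, show x + 1 + s + 1 = x + s + 1 + 1 by ring,
      ← poch_natCast_succ_left, poch_natCast_succ]
    ring
  simp only [newtonProd]
  rw [shift_left, mul_sub, mul_left_comm, shift_right, poch_natCast_succ (-x),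
    poch_natCast_succ (x + s + 1)]
  ring

theorem newtonProd_backward_difference (s x : ℂ) (i : ℕ) :
    x * (newtonProd s (x - 1) (i + 1) - newtonProd s x (i + 1))
      = (i + 1) * (2 * x + s) * (x - i) * newtonProd s x i := by
  have h := newtonProd_forward_difference s (-x - s - 1) i
  rw [show -x - s - 1 + 1 = -(x - 1) - s - 1 by ring] at h
  simp only [newtonProd_reflect] at h
  linear_combination -h

theorem newtonProd_difference_equation {α β x : ℂ} (i : ℕ) (h₀ : 2 * x + (α + β) ≠ 0)
    (h₁ : 2 * x + (α + β) + 1 ≠ 0) (h₂ : 2 * x + (α + β) + 2 ≠ 0) :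
    2 * (x + α + 1) * (x + (α + β) + 1) / ((2 * x + (α + β) + 1) * (2 * x + (α + β) + 2))
        * (newtonProd (α + β) (x + 1) (i + 1) - newtonProd (α + β) x (i + 1))
      + 2 * x * (x + β) / ((2 * x + (α + β)) * (2 * x + (α + β) + 1))
        * (newtonProd (α + β) (x - 1) (i + 1) - newtonProd (α + β) x (i + 1))
      = -2 * (i + 1) * (α + 1 + i) * newtonProd (α + β) x i := by
  have forward : 2 * (x + α + 1) * (x + (α + β) + 1) /
        ((2 * x + (α + β) + 1) * (2 * x + (α + β) + 2))
        * (newtonProd (α + β) (x + 1) (i + 1) - newtonProd (α + β) x (i + 1))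
      = -2 * (i + 1) * (x + α + 1) * (x + (α + β) + 1 + i) / (2 * x + (α + β) + 1)
        * newtonProd (α + β) x i := by
    field_simp
    linear_combination (x + α + 1) * newtonProd_forward_difference (α + β) x i
  have backward : 2 * x * (x + β) / ((2 * x + (α + β)) * (2 * x + (α + β) + 1))
        * (newtonProd (α + β) (x - 1) (i + 1) - newtonProd (α + β) x (i + 1))
      = 2 * (i + 1) * (x + β) * (x - i) / (2 * x + (α + β) + 1) * newtonProd (α + β) x i := by
    field_simp
    linear_combination (x + β) * newtonProd_backward_difference (α + β) x i
  rw [forward, backward]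
  field_simp
  ring

end NewtonProduct

section JacobiOperator

theorem ne_zero_of_eq_add_intCast {x y : ℂ} (hx : ∀ m : ℤ, x ≠ m) (m : ℤ) (hy : y = x + m) :
    y ≠ 0 :=
  fun h => hx (-m) (by push_cast; linear_combination h - hy)

/-- The factor of `φ₊^{(i)}` that does not depend on `i`; it is annihilated by `L - 1`. -/
noncomputable def phiWeight (α ε : ℂ) (n : ℤ) : ℂ := poch (ε + α + 1) n / poch (ε + 1) n

theorem phiWeight_zero (α ε : ℂ) : phiWeight α ε 0 = 1 := by simp [phiWeight, poch_zero]

theorem phiWeight_add_one {α ε : ℂ} {n : ℤ} (hα : n + ε + α + 1 ≠ 0) (hε : n + ε + 1 ≠ 0) :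
    (n + ε + 1) * phiWeight α ε (n + 1) = (n + ε + α + 1) * phiWeight α ε n := by
  have num_eq : ε + α + 1 + n = n + ε + α + 1 := by ring
  have denom_eq : ε + 1 + n = n + ε + 1 := by ring
  rw [phiWeight, phiWeight, poch_add_one (num_eq ▸ hα), poch_add_one (denom_eq ▸ hε), num_eq,
    denom_eq]
  field_simp

variable {α β ε : ℂ}

namespace GoodParams

theorem neg (h : GoodParams α β ε) : GoodParams (-α) (-β) (ε + α + β) := by
  intro m
  obtain ⟨hε, hα, hβ, hαβ, hden⟩ := h m
  refine ⟨hαβ, ?_, ?_, ?_, ?_⟩ <;> ring_nf at * <;> assumption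

theorem swap (h : GoodParams α β ε) : GoodParams β α ε := by
  intro m
  obtain ⟨hε, hα, hβ, hαβ, hden⟩ := h m
  rw [add_right_comm] at hαβ hden
  exact ⟨hε, hβ, hα, hαβ, hden⟩

theorem eps_add_one_ne_zero (h : GoodParams α β ε) (n : ℤ) : n + ε + 1 ≠ 0 :=
  ne_zero_of_eq_add_intCast (fun m => (h m).1) (n + 1) (by push_cast; ring)

theorem eps_alpha_ne_zero (h : GoodParams α β ε) (n : ℤ) : n + ε + α ≠ 0 :=
  ne_zero_of_eq_add_intCast (fun m => (h m).2.1) n (by ring)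

theorem eps_beta_ne_zero (h : GoodParams α β ε) (n : ℤ) : n + ε + β ≠ 0 :=
  ne_zero_of_eq_add_intCast (fun m => (h m).2.2.1) n (by ring)

theorem eps_alpha_beta_add_one_ne_zero (h : GoodParams α β ε) (n : ℤ) : n + ε + α + β + 1 ≠ 0 :=
  ne_zero_of_eq_add_intCast (fun m => (h m).2.2.2.1) (n + 1) (by push_cast; ring)

theorem denominators_ne_zero (h : GoodParams α β ε) (n : ℤ) :
    2 * n + 2 * ε + α + β ≠ 0 ∧ 2 * n + 2 * ε + α + β + 1 ≠ 0 ∧ 2 * n + 2 * ε + α + β + 2 ≠ 0 := by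
  have hden (m : ℤ) : 2 * ε + α + β ≠ m := (h m).2.2.2.2
  exact ⟨ne_zero_of_eq_add_intCast hden (2 * n) (by push_cast; ring),
    ne_zero_of_eq_add_intCast hden (2 * n + 1) (by push_cast; ring),
    ne_zero_of_eq_add_intCast hden (2 * n + 2) (by push_cast; ring)⟩

theorem phiWeight_add_one (h : GoodParams α β ε) (n : ℤ) :
    (n + ε + 1) * phiWeight α ε (n + 1) = (n + ε + α + 1) * phiWeight α ε n :=
  _root_.phiWeight_add_one
    (ne_zero_of_eq_add_intCast (fun m => (h m).2.1) (n + 1) (by push_cast; ring))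
    (h.eps_add_one_ne_zero n)

end GoodParams

theorem jacobiL_coeff_sum_eq_one {α β x d : ℂ} (hd : d = 2 * x + α + β) (h₀ : d ≠ 0)
    (h₁ : d + 1 ≠ 0) (h₂ : d + 2 ≠ 0) :
    2 * (x + α + 1) * (x + α + β + 1) / ((d + 1) * (d + 2)) + (β ^ 2 - α ^ 2) / (d * (d + 2))
      + 2 * x * (x + β) / (d * (d + 1)) = 1 := by
  field_simp
  rw [hd]
  ring

theorem jacobiL_phiWeight_mul_sub (h : GoodParams α β ε) (f : ℤ → ℂ) (n : ℤ) :
    jacobiL α β ε (fun m => phiWeight α ε m * f m) n - phiWeight α ε n * f n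
      = phiWeight α ε n * (
        2 * (n + ε + α + 1) * (n + ε + α + β + 1) /
          ((2 * n + 2 * ε + α + β + 1) * (2 * n + 2 * ε + α + β + 2)) * (f (n + 1) - f n)
        + 2 * (n + ε) * (n + ε + β) /
          ((2 * n + 2 * ε + α + β) * (2 * n + 2 * ε + α + β + 1)) * (f (n - 1) - f n)) := by
  have weight_succ := h.phiWeight_add_one n
  have weight_pred : (n + ε) * phiWeight α ε n = (n + ε + α) * phiWeight α ε (n - 1) := by
    have := h.phiWeight_add_one (n - 1)
    push_cast at this
    ring_nf at this ⊢
    exact this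
  obtain ⟨h₀, h₁, h₂⟩ := h.denominators_ne_zero n
  have coeff_sum := jacobiL_coeff_sum_eq_one (α := α) (β := β) (x := n + ε) (by ring) h₀ h₁ h₂
  unfold jacobiL
  linear_combination
    2 * (n + ε + α + β + 1) /
        ((2 * n + 2 * ε + α + β + 1) * (2 * n + 2 * ε + α + β + 2)) * f (n + 1) * weight_succ
    - 2 * (n + ε + β) /
        ((2 * n + 2 * ε + α + β) * (2 * n + 2 * ε + α + β + 1)) * f (n - 1) * weight_pred
    + phiWeight α ε n * f n * coeff_sum

theorem jacobiL_phiWeight_mul_newtonProd_sub (h : GoodParams α β ε) (i : ℕ) (n : ℤ) :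
    jacobiL α β ε (fun m => phiWeight α ε m * newtonProd (α + β) (m + ε) (i + 1)) n
        - phiWeight α ε n * newtonProd (α + β) (n + ε) (i + 1)
      = -2 * (i + 1) * (α + 1 + i) * (phiWeight α ε n * newtonProd (α + β) (n + ε) i) := by
  obtain ⟨h₀, h₁, h₂⟩ := h.denominators_ne_zero n
  have hd : 2 * n + 2 * ε + α + β = 2 * (n + ε) + (α + β) := by ring
  rw [hd] at h₀ h₁ h₂
  rw [jacobiL_phiWeight_mul_sub h fun m => newtonProd (α + β) (m + ε) (i + 1), Int.cast_add,
    Int.cast_sub, Int.cast_one, add_right_comm (n : ℂ) 1 ε, sub_add_eq_add_sub, hd,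
    add_assoc _ α β, newtonProd_difference_equation i h₀ h₁ h₂]
  ring

theorem jacobiLin_sub_one_apply (α β ε : ℂ) (f : ℤ → ℂ) (n : ℤ) :
    (jacobiLin α β ε - 1) f n = jacobiL α β ε f n - f n :=
  rfl

theorem phiPd_apply (α β ε : ℂ) (i : ℕ) (n : ℤ) :
    phiPd α β ε i n = ((-2) ^ i * i.factorial * poch (α + 1) i)⁻¹
      * (phiWeight α ε n * newtonProd (α + β) (n + ε) i) := by
  simp only [phiPd, phiWeight, newtonProd, ← add_assoc]
  ring

theorem phiPd_zero (α β ε : ℂ) : phiPd α β ε 0 = phiWeight α ε := by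
  ext n
  simp [phiPd_apply, newtonProd_zero, poch_zero]

theorem jacobiLin_sub_one_phiPd_zero (h : GoodParams α β ε) :
    (jacobiLin α β ε - 1) (phiPd α β ε 0) = 0 := by
  ext n
  rw [jacobiLin_sub_one_apply, phiPd_zero]
  simpa using jacobiL_phiWeight_mul_sub h (fun _ => 1) n

theorem jacobiLin_sub_one_phiPd_succ (h : GoodParams α β ε) {i : ℕ} (hi : α + 1 + i ≠ 0) :
    (jacobiLin α β ε - 1) (phiPd α β ε (i + 1)) = phiPd α β ε i := by
  have hfun (j : ℕ) : phiPd α β ε j = ((-2) ^ j * j.factorial * poch (α + 1) j)⁻¹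
      • fun m : ℤ => phiWeight α ε m * newtonProd (α + β) (m + ε) j :=
    funext (phiPd_apply α β ε j)
  rw [hfun, hfun, map_smul]
  ext n
  have hstep := jacobiL_phiWeight_mul_newtonProd_sub h i n
  rw [Pi.smul_apply, Pi.smul_apply, jacobiLin_sub_one_apply, hstep, smul_eq_mul,
    smul_eq_mul, poch_natCast_succ, Nat.factorial_succ, pow_succ]
  have hi' : (i : ℂ) + 1 ≠ 0 := i.cast_add_one_ne_zero
  push_cast
  simp only [mul_inv]
  field_simp

theorem psiPd_eq_phiPd_neg (α β ε : ℂ) (i : ℕ) :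
    psiPd α β ε i = phiPd (-α) (-β) (ε + α + β) i := by
  ext n
  rw [psiPd, phiPd]
  ring_nf

theorem jacobiLin_neg (α β ε : ℂ) : jacobiLin (-α) (-β) (ε + α + β) = jacobiLin α β ε := by
  ext f n
  change jacobiL _ _ _ f n = jacobiL _ _ _ f n
  rw [jacobiL, jacobiL]
  ring_nf

theorem eq_zero_of_jacobiLin_sub_one_eq_zero (h : GoodParams α β ε) {f : ℤ → ℂ}
    (hf : (jacobiLin α β ε - 1) f = 0) (h0 : f 0 = 0) (h1 : f 1 = 0) : f = 0 := by
  refine eq_zero_of_three_term_recurrence (fun n => ?_) (fun n => ?_) (fun n => ?_) h0 h1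
    (a := fun n => 2 * (n + ε + 1) * (n + ε + α + β + 1) /
      ((2 * n + 2 * ε + α + β + 1) * (2 * n + 2 * ε + α + β + 2)))
    (b := fun n => (β ^ 2 - α ^ 2) /
      ((2 * n + 2 * ε + α + β) * (2 * n + 2 * ε + α + β + 2)) - 1)
    (c := fun n => 2 * (n + ε + α) * (n + ε + β) /
      ((2 * n + 2 * ε + α + β) * (2 * n + 2 * ε + α + β + 1)))
  · obtain ⟨-, h₁, h₂⟩ := h.denominators_ne_zero n
    simp [h₁, h₂, h.eps_add_one_ne_zero n, h.eps_alpha_beta_add_one_ne_zero n]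
  · obtain ⟨h₀, h₁, -⟩ := h.denominators_ne_zero n
    simp [h₀, h₁, h.eps_alpha_ne_zero n, h.eps_beta_ne_zero n]
  · have hn : jacobiL α β ε f n - f n = 0 := congrFun hf n
    rw [jacobiL] at hn
    linear_combination hn

theorem casoratian_phiPd_psiPd_ne_zero (h : GoodParams α β ε) (hα : α ≠ 0) :
    phiPd α β ε 0 0 * psiPd α β ε 0 1 - phiPd α β ε 0 1 * psiPd α β ε 0 0 ≠ 0 := by
  have hε := h.eps_add_one_ne_zero 0
  have hαβ := h.eps_alpha_beta_add_one_ne_zero 0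
  have hden := (h.denominators_ne_zero 0).2.2
  have hφ := h.phiWeight_add_one 0
  have hψ := h.neg.phiWeight_add_one 0
  simp only [psiPd_eq_phiPd_neg, phiPd_zero, phiWeight_zero, Int.cast_zero, zero_add, mul_zero,
    mul_one, one_mul] at *
  have hprod : (ε + 1) * (ε + α + β + 1)
      * (phiWeight (-α) (ε + α + β) 1 - phiWeight α ε 1) = -α * (2 * ε + α + β + 2) := by
    linear_combination (ε + 1) * hψ - (ε + α + β + 1) * hφ
  refine right_ne_zero_of_mul (a := (ε + 1) * (ε + α + β + 1)) ?_
  rw [hprod]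
  exact mul_ne_zero (neg_ne_zero.2 hα) hden

theorem add_one_add_natCast_ne_zero {k i : ℕ} (hk : ∀ m : ℤ, α = m → k ≤ |m|) (hi : i + 1 < k) :
    α + 1 + i ≠ 0 := by
  intro h
  have := hk (-(i + 1)) (by push_cast; linear_combination h)
  rw [abs_neg, abs_of_nonneg (by lia)] at this
  lia

theorem isJordanBasis_phiPd_psiPd (h : GoodParams α β ε) {k : ℕ} (hk : 1 ≤ k)
    (hkα : ∀ m : ℤ, α = m → k ≤ |m|) :
    IsJordanBasis (jacobiLin α β ε - 1) k fun b : Bool => cond b (psiPd α β ε) (phiPd α β ε) := by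
  have hα : α ≠ 0 := fun h0 => by simpa [Nat.ne_of_gt hk] using hkα 0 (by simpa using h0)
  have hkα' (m : ℤ) (hm : -α = m) : (k : ℤ) ≤ |m| := by
    simpa using hkα (-m) (by push_cast; linear_combination -hm)
  have hcas := casoratian_phiPd_psiPd_ne_zero h hα
  have hφ := jacobiLin_sub_one_phiPd_zero h
  have hψ : (jacobiLin α β ε - 1) (psiPd α β ε 0) = 0 := by
    rw [← jacobiLin_neg, psiPd_eq_phiPd_neg]
    exact jacobiLin_sub_one_phiPd_zero h.neg
  refine ⟨Bool.forall_bool.2 ⟨hφ, hψ⟩, Bool.forall_bool.2 ⟨fun i hi => ?_, fun i hi => ?_⟩, ?_, ?_⟩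
  · exact jacobiLin_sub_one_phiPd_succ h (add_one_add_natCast_ne_zero hkα hi)
  · rw [← jacobiLin_neg]
    simp only [cond_true, psiPd_eq_phiPd_neg]
    exact jacobiLin_sub_one_phiPd_succ h.neg (add_one_add_natCast_ne_zero hkα' hi)
  · refine (linearIndependent_equiv' finTwoEquiv ?_).1
      (linearIndependent_pair_of_casoratian_ne_zero hcas)
    ext i : 1
    fin_cases i <;> rfl
  · refine (ker_le_span_pair_of_casoratian_ne_zero hcas hφ hψ fun f =>
      eq_zero_of_jacobiLin_sub_one_eq_zero h).trans (Submodule.span_mono ?_)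
    rintro g (rfl | rfl)
    exacts [⟨false, rfl⟩, ⟨true, rfl⟩]

/-- Multiplication by `(-1)^n`, which interchanges the eigenvalues `1` and `-1`. -/
noncomputable def signTwist : (ℤ → ℂ) ≃ₗ[ℂ] (ℤ → ℂ) :=
  LinearEquiv.piCongrRight fun n => LinearEquiv.smulOfUnit ((-1) ^ n)

theorem signTwist_apply (f : ℤ → ℂ) (n : ℤ) : signTwist f n = (-1) ^ n * f n := by
  simp [signTwist, LinearEquiv.smulOfUnit, Units.smul_def]

theorem jacobiLin_add_one_signTwist (α β ε : ℂ) (f : ℤ → ℂ) :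
    (jacobiLin α β ε + 1) (signTwist f) = -signTwist ((jacobiLin β α ε - 1) f) := by
  ext n
  change jacobiL α β ε (signTwist f) n + signTwist f n = -signTwist (jacobiL β α ε f - f) n
  simp only [signTwist_apply, Pi.sub_apply, jacobiL]
  rw [zpow_add_one₀ (by norm_num), zpow_sub_one₀ (by norm_num), add_right_comm _ β α,
    add_right_comm _ β α]
  ring

theorem phiMd_eq_signTwist (α β ε : ℂ) (i : ℕ) :
    phiMd α β ε i = (-1 : ℂ) ^ i • signTwist (phiPd β α ε i) := by
  ext n
  have hsign : ((-2 : ℂ) ^ i)⁻¹ = (-1) ^ i * (2 ^ i)⁻¹ := by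
    rw [neg_pow, mul_inv, ← inv_pow, inv_neg_one]
  have hsq : ((-1 : ℂ) ^ i) * (-1) ^ i = 1 := by rw [← mul_pow]; norm_num
  rw [Pi.smul_apply, signTwist_apply, smul_eq_mul, phiMd, phiPd, add_right_comm _ β α]
  simp only [div_eq_mul_inv, mul_inv, hsign]
  linear_combination (-(-1) ^ n * (poch (ε + β + 1) n * (poch (ε + 1) n)⁻¹) *
    (poch (-(n + ε)) i * poch (n + ε + α + β + 1) i) *
    ((2 ^ i)⁻¹ * (i.factorial : ℂ)⁻¹ * (poch (β + 1) i)⁻¹)) * hsq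

theorem psiMd_eq_phiMd_neg (α β ε : ℂ) (i : ℕ) :
    psiMd α β ε i = phiMd (-α) (-β) (ε + α + β) i := by
  ext n
  rw [psiMd, phiMd]
  ring_nf

theorem psiMd_eq_signTwist (α β ε : ℂ) (i : ℕ) :
    psiMd α β ε i = (-1 : ℂ) ^ i • signTwist (psiPd β α ε i) := by
  rw [psiMd_eq_phiMd_neg, phiMd_eq_signTwist, psiPd_eq_phiPd_neg, add_right_comm ε]

theorem isJordanBasis_phiMd_psiMd (h : GoodParams α β ε) {l : ℕ} (hl : 1 ≤ l)
    (hlβ : ∀ m : ℤ, β = m → l ≤ |m|) :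
    IsJordanBasis (jacobiLin α β ε + 1) l fun b : Bool => cond b (psiMd α β ε) (phiMd α β ε) := by
  have htwist (f : ℤ → ℂ) : (jacobiLin α β ε + 1) (signTwist f)
      = (-1 : ℂˣ) • signTwist ((jacobiLin β α ε - 1) f) := by
    simpa [Units.smul_def] using jacobiLin_add_one_signTwist α β ε f
  convert (isJordanBasis_phiPd_psiPd h.swap hl hlβ).conj htwist using 3 with b i
  cases b
  · simp [phiMd_eq_signTwist, Units.smul_def]
  · simp [psiMd_eq_signTwist, Units.smul_def]

end JacobiOperator

/-- Description of the kernels of `(L_{α,β;ε} - 1)^k` and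
`(L_{α,β;ε} + 1)^l`, together with the linear independence of the spanning
families and the resulting dimension count. -/
theorem stmt4 (α β ε : ℂ) (hgood : GoodParams α β ε) (k l : ℕ)
    (hk : 1 ≤ k) (hl : 1 ≤ l)
    (hkα : ∀ m : ℤ, α = (m : ℂ) → (k : ℤ) ≤ |m|)
    (hlβ : ∀ m : ℤ, β = (m : ℂ) → (l : ℤ) ≤ |m|) :
    LinearMap.ker ((jacobiLin α β ε - 1 : Module.End ℂ (ℤ → ℂ)) ^ k)
      = Submodule.span ℂ {g : ℤ → ℂ | ∃ i < k, g = phiPd α β ε i ∨ g = psiPd α β ε i} ∧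
    LinearMap.ker ((jacobiLin α β ε + 1 : Module.End ℂ (ℤ → ℂ)) ^ l)
      = Submodule.span ℂ {g : ℤ → ℂ | ∃ i < l, g = phiMd α β ε i ∨ g = psiMd α β ε i} ∧
    LinearIndependent ℂ (fun x : Fin k ⊕ Fin k =>
      Sum.elim (fun i : Fin k => phiPd α β ε i) (fun i : Fin k => psiPd α β ε i) x) ∧
    LinearIndependent ℂ (fun x : Fin l ⊕ Fin l =>
      Sum.elim (fun i : Fin l => phiMd α β ε i) (fun i : Fin l => psiMd α β ε i) x) ∧
    Module.finrank ℂ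
      ↥(LinearMap.ker ((jacobiLin α β ε - 1 : Module.End ℂ (ℤ → ℂ)) ^ k)) = 2 * k ∧
    Module.finrank ℂ
      ↥(LinearMap.ker ((jacobiLin α β ε + 1 : Module.End ℂ (ℤ → ℂ)) ^ l)) = 2 * l := by
  have plus := isJordanBasis_phiPd_psiPd hgood hk hkα
  have minus := isJordanBasis_phiMd_psiMd hgood hl hlβ
  exact ⟨plus.ker_pow_eq_span_of_bool, minus.ker_pow_eq_span_of_bool,
    plus.linearIndependent_sumElim_of_bool, minus.linearIndependent_sumElim_of_bool,
    plus.finrank_ker_pow, minus.finrank_ker_pow⟩
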